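/- In T(v) the identity a^p b^p = (h^p − h)^n holds; more precisely, a^p b^p = v(h)·v(h+1)⋯v(h+p−1), and this product equals (h^p − h)^n because all roots of v lie in F_p. -/

import Mathlib

/-!
Moving `a` past a polynomial in `h` shifts its argument: `a f(h) = f(h - 1) a`. Hence
`a^(m+1) b^(m+1) = a (a^m b^m) b` and induction give
`a^m b^m = v(h - 1) v(h - 2) ⋯ v(h - m)` (`Ta_pow_mul_Tb_pow`). For `m = p` the shifts
`-1, …, -p` are `p - 1, …, 0` in characteristic `p`, which is the first equality.

For the second, `v` is a product of `n` linear factors `X - r` with `r` in the prime field. For each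
of them `∏_{k < p} (X + k - r) = X^p - X` (`prod_shift_linear`), because the `p` distinct elements
`r - k` are roots of the monic polynomial `X^p - X` of degree `p`.
-/

/-!
The algebra `T(v)` of Hodges: the quotient of the free algebra `K⟨a,b,h⟩` by the two-sided
ideal generated by `ha − ah − a`, `hb − bh + b`, `ba − v(h)`, `ab − v(h−1)`.
We realise it as a `RingQuot` of the free algebra on three generators
(`0 ↦ a`, `1 ↦ b`, `2 ↦ h`).
-/

open Polynomial

noncomputable section

/-- the generator `a` of the free algebra `K⟨a,b,h⟩` -/
def fa (K : Type) [Field K] : FreeAlgebra K (Fin 3) := FreeAlgebra.ι K 0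

/-- the generator `b` of the free algebra `K⟨a,b,h⟩` -/
def fb (K : Type) [Field K] : FreeAlgebra K (Fin 3) := FreeAlgebra.ι K 1

/-- the generator `h` of the free algebra `K⟨a,b,h⟩` -/
def fh (K : Type) [Field K] : FreeAlgebra K (Fin 3) := FreeAlgebra.ι K 2

/-- The defining relations of `T(v)`. -/
inductive TvRel (K : Type) [Field K] (v : K[X]) :
    FreeAlgebra K (Fin 3) → FreeAlgebra K (Fin 3) → Prop
  | ha : TvRel K v (fh K * fa K) (fa K * (fh K + 1))
  | hb : TvRel K v (fh K * fb K) (fb K * (fh K - 1))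
  | ba : TvRel K v (fb K * fa K) (aeval (fh K) v)
  | ab : TvRel K v (fa K * fb K) (aeval (fh K - 1) v)

/-- Hodges' algebra `T(v)`. -/
abbrev Tv (K : Type) [Field K] (v : K[X]) := RingQuot (TvRel K v)

/-- the image of `a` in `T(v)` -/
def Ta (K : Type) [Field K] (v : K[X]) : Tv K v := RingQuot.mkAlgHom K (TvRel K v) (fa K)

/-- the image of `b` in `T(v)` -/
def Tb (K : Type) [Field K] (v : K[X]) : Tv K v := RingQuot.mkAlgHom K (TvRel K v) (fb K)

/-- the image of `h` in `T(v)` -/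
def Th (K : Type) [Field K] (v : K[X]) : Tv K v := RingQuot.mkAlgHom K (TvRel K v) (fh K)

/-- The relation `ha = a(h+1)`, extended from `h` to all polynomials in `h`. -/
lemma Ta_mul_aeval (K : Type) [Field K] (v f : K[X]) :
    Ta K v * aeval (Th K v) f = aeval (Th K v - 1) f * Ta K v := by
  have hrel : Th K v * Ta K v = Ta K v * (Th K v + 1) := by
    simpa [Th, Ta] using RingQuot.mkAlgHom_rel K (TvRel.ha (K := K) (v := v))
  have h1 : Ta K v * Th K v = (Th K v - 1) * Ta K v := by
    rw [sub_mul, hrel]; noncomm_ring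
  induction f using Polynomial.induction_on' with
  | add f g hf hg => simp only [map_add, mul_add, add_mul, hf, hg]
  | monomial k c =>
    have h2 : Ta K v * Th K v ^ k = (Th K v - 1) ^ k * Ta K v :=
      SemiconjBy.pow_right h1 k
    rw [aeval_monomial, aeval_monomial, ← mul_assoc, ← Algebra.commutes c (Ta K v), mul_assoc, h2,
      mul_assoc]

lemma Ta_pow_mul_Tb_pow (K : Type) [Field K] (v : K[X]) (m : ℕ) :
    Ta K v ^ m * Tb K v ^ m =
      aeval (Th K v) (∏ k ∈ Finset.range m, v.comp (X - C ((k + 1 : ℕ) : K))) := by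
  induction m with
  | zero => simp
  | succ m ih =>
    have hrel : Ta K v * Tb K v = aeval (Th K v - 1) v := by
      have := RingQuot.mkAlgHom_rel K (TvRel.ab (K := K) (v := v))
      rw [map_mul, ← aeval_algHom_apply] at this
      simpa [Th, Ta, Tb] using this
    have hshift : ∀ f : K[X], aeval (Th K v - 1) f = aeval (Th K v) (f.comp (X - C 1)) := by
      intro f; simp [aeval_comp]
    rw [pow_succ', pow_succ, show Ta K v * Ta K v ^ m * (Tb K v ^ m * Tb K v) =
      Ta K v * (Ta K v ^ m * Tb K v ^ m) * Tb K v by simp only [mul_assoc], ih, Ta_mul_aeval,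
      mul_assoc, hrel, hshift, hshift, ← map_mul, Finset.prod_range_succ', prod_comp]
    congr 2
    · refine Finset.prod_congr rfl fun k _ => ?_
      rw [comp_assoc]
      congr 1
      simp [sub_sub, add_comm]
    · simp

lemma prod_shift_linear (K : Type) [Field K] (p : ℕ) [Fact p.Prime] [CharP K p] (m : ℕ) :
    ∏ k ∈ Finset.range p, (X + C (k : K) - C (m : K)) = (X ^ p - X : K[X]) := by
  have hp : 1 < p := (Fact.out : p.Prime).one_lt
  have hfrob : ∀ k : ℕ, (k : K) ^ p = k := fun k =>
    map_natCast (frobenius K p) k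
  have hlin : ∀ k : ℕ, (X + C (k : K) - C (m : K)) = X - C ((m : K) - k) := fun k => by
    rw [C_sub]; ring
  simp_rw [hlin]
  have hmon : (X ^ p - X : K[X]).Monic :=
    monic_X_pow_sub (by rw [degree_X]; exact_mod_cast hp)
  refine (eq_of_monic_of_dvd_of_natDegree_le (monic_prod_of_monic _ _ fun k _ => monic_X_sub_C _)
    hmon ?_ ?_).symm
  · refine Finset.prod_dvd_of_coprime (fun i hi j hj hij => ?_) fun k _ => ?_
    · refine isCoprime_X_sub_C_of_isUnit_sub (IsUnit.mk0 _ fun h0 => hij ?_)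
      have hc : (i : K) = j := by linear_combination -h0
      exact CharP.natCast_injOn_Iio K p (by simpa using hi) (by simpa using hj) hc
    · rw [dvd_iff_isRoot, IsRoot.def, eval_sub, eval_pow, eval_X, sub_pow_char, hfrob, hfrob,
        sub_self]
  · rw [FiniteField.X_pow_card_sub_X_natDegree_eq K hp,
      natDegree_prod_of_monic _ _ fun k _ => monic_X_sub_C _]
    simp only [natDegree_X_sub_C, Finset.sum_const, Finset.card_range, smul_eq_mul, mul_one,
      le_refl]

/-!
STATEMENT 5: In `T(v)` one has `a^p b^p = v(h)·v(h+1)⋯v(h+p−1)`, and this product equals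
`(h^p − h)^n` (because all roots of `v` lie in `F_p`).  The product
`v(h)·v(h+1)⋯v(h+p−1)` is expressed by evaluating the commutative polynomial
`∏_{k=0}^{p−1} v(z+k)` at `h`.
-/

theorem statement_5 (K : Type) [Field K] (p n : ℕ) [Fact p.Prime] [CharP K p]
    [IsAlgClosed K] (hn : 0 < n) (hpn : Nat.Coprime p n)
    (v : K[X]) (hmonic : v.Monic) (hdeg : v.natDegree = n)
    (hroots : ∀ x : K, v.IsRoot x → ∃ m : ℕ, (m : K) = x) :
    Ta K v ^ p * Tb K v ^ p =
      Polynomial.aeval (Th K v)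
        (∏ k ∈ Finset.range p, v.comp (Polynomial.X + Polynomial.C (k : K))) ∧
    Polynomial.aeval (Th K v)
        (∏ k ∈ Finset.range p, v.comp (Polynomial.X + Polynomial.C (k : K))) =
      (Th K v ^ p - Th K v) ^ n := by
  constructor
  · rw [Ta_pow_mul_Tb_pow, ← Finset.prod_range_reflect]
    congr 1
    refine Finset.prod_congr rfl fun k hk => ?_
    -- the reflected factor has shift `-(p - k)`, which is `k` in characteristic `p`
    have hk' : p - 1 - k + 1 + k = p := by have := Finset.mem_range.mp hk; omega
    have hc : ((p - 1 - k + 1 : ℕ) : K) + k = 0 := by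
      rw [← Nat.cast_add, hk', CharP.cast_eq_zero]
    rw [eq_neg_of_add_eq_zero_left hc, C_neg, sub_neg_eq_add]
  · have hv : v = (v.roots.map (X - C ·)).prod :=
      (IsAlgClosed.splits v).eq_prod_roots_of_monic hmonic
    have hcard : v.roots.card = n := by
      rw [← hdeg, (IsAlgClosed.splits v).natDegree_eq_card_roots]
    have hpoly : ∏ k ∈ Finset.range p, v.comp (X + C (k : K)) = (X ^ p - X) ^ n := by
      have hcomp : ∀ k : ℕ, v.comp (X + C (k : K)) =
          (v.roots.map fun r => X + C (k : K) - C r).prod := fun k => by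
        conv_lhs => rw [hv]
        simp [multiset_prod_comp, Multiset.map_map]
      simp_rw [hcomp]
      refine (Multiset.prod_map_prod_map (Finset.range p).val v.roots).trans ?_
      have hfac : ∀ r ∈ v.roots,
          ((Finset.range p).val.map fun k : ℕ => X + C (k : K) - C r).prod = X ^ p - X := by
        intro r hr
        obtain ⟨m, rfl⟩ := hroots r (isRoot_of_mem_roots hr)
        exact prod_shift_linear K p m
      rw [Multiset.map_congr rfl hfac, Multiset.map_const', Multiset.prod_replicate, hcard]
    rw [hpoly]
    simp
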